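/- Let φ:ℝ→ℝ be an (ℓ,L) bi-Lipschitz mapping (ℓ|x−y| ≤ |φ(x)−φ(y)| ≤ L|x−y|, 0<ℓ<L<∞) that satisfies φ(x+a) = φ(x) + b for fixed a,b>0 and all x. Then there exists a sequence of C^∞ diffeomorphisms φₙ:ℝ→ℝ, each (ℓ,L) bi-Lipschitz and satisfying φₙ(x+a) = φₙ(x) + b, such that φₙ converges uniformly to φ. -/

import Mathlib

open MeasureTheory in
theorem stmt_4_aux (ℓ L a b : ℝ) (hℓ : 0 < ℓ)
    (φ : ℝ → ℝ) (hc : Continuous φ)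
    (hm : ∀ x y : ℝ, y ≤ x → ℓ * (x - y) ≤ φ x - φ y ∧ φ x - φ y ≤ L * (x - y))
    (hbilip : ∀ x y : ℝ, |φ x - φ y| ≤ L * |x - y|) (hL : 0 < L)
    (hper : ∀ x, φ (x + a) = φ x + b) (ε : ℝ) (hε : 0 < ε) :
    ∃ ψ : ℝ → ℝ, ContDiff ℝ (⊤ : ℕ∞) ψ ∧ Function.Bijective ψ ∧
      (∀ x y, ℓ * |x - y| ≤ |ψ x - ψ y| ∧ |ψ x - ψ y| ≤ L * |x - y|) ∧
      (∀ x, ψ (x + a) = ψ x + b) ∧ ∀ x, dist (ψ x) (φ x) ≤ L * ε := by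
  let f : ContDiffBump (0 : ℝ) := ⟨ε / 2, ε, by positivity, by linarith⟩
  let ρ : ℝ → ℝ := f.normed volume
  have hρ0 : ∀ t, 0 ≤ ρ t := fun t => f.nonneg_normed t
  have hρc : Continuous ρ := f.continuous_normed
  have hρs : HasCompactSupport ρ := f.hasCompactSupport_normed
  have hρi : Integrable ρ := f.integrable_normed
  have hρ1 : ∫ t, ρ t = 1 := f.integral_normed
  let ψ : ℝ → ℝ := convolution ρ φ (ContinuousLinearMap.lsmul ℝ ℝ) volume
  have hψ : ∀ x, ψ x = ∫ t, ρ t * φ (x - t) := fun x => rfl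
  have hI : ∀ x, Integrable fun t => ρ t * φ (x - t) := fun x =>
    (hρc.mul (hc.comp (by fun_prop))).integrable_of_hasCompactSupport hρs.mul_right
  have hsm : ContDiff ℝ (⊤ : ℕ∞) ψ :=
    hρs.contDiff_convolution_left _ f.contDiff_normed hc.locallyIntegrable
  have hd : ∀ x y, ψ x - ψ y = ∫ t, ρ t * (φ (x - t) - φ (y - t)) := by
    intro x y
    rw [hψ, hψ, ← integral_sub (hI x) (hI y)]
    simp only [mul_sub]
  have hId : ∀ x y, Integrable fun t => ρ t * (φ (x - t) - φ (y - t)) := by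
    intro x y
    simp only [mul_sub]
    exact (hI x).sub (hI y)
  have hconst : ∀ c : ℝ, ∫ t, ρ t * c = c := fun c => by
    rw [integral_mul_const, hρ1, one_mul]
  have hmψ : ∀ x y : ℝ, y ≤ x → ℓ * (x - y) ≤ ψ x - ψ y ∧ ψ x - ψ y ≤ L * (x - y) := by
    intro x y hxy
    rw [hd]
    constructor
    · rw [← hconst (ℓ * (x - y))]
      refine integral_mono (hρi.mul_const _) (hId x y) fun t => ?_
      have := (hm (x - t) (y - t) (by linarith)).1
      exact mul_le_mul_of_nonneg_left (by simpa using this) (hρ0 t)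
    · rw [← hconst (L * (x - y))]
      refine integral_mono (hId x y) (hρi.mul_const _) fun t => ?_
      have := (hm (x - t) (y - t) (by linarith)).2
      exact mul_le_mul_of_nonneg_left (by simpa using this) (hρ0 t)
  have hbl : ∀ x y : ℝ, y ≤ x →
      ℓ * |x - y| ≤ |ψ x - ψ y| ∧ |ψ x - ψ y| ≤ L * |x - y| := by
    intro x y hxy
    have h := hmψ x y hxy
    have h0 : 0 ≤ ℓ * (x - y) := mul_nonneg hℓ.le (by linarith)
    rw [abs_of_nonneg (sub_nonneg.2 hxy), abs_of_nonneg (h0.trans h.1)]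
    exact h
  refine ⟨ψ, hsm, ⟨?_, ?_⟩, ?_, ?_, ?_⟩
  · refine StrictMono.injective fun y x hxy => ?_
    have := (hmψ x y hxy.le).1
    have h2 := mul_pos hℓ (sub_pos.2 hxy)
    linarith
  · refine hsm.continuous.surjective ?_ ?_
    · refine Filter.tendsto_atTop_mono' _ ?_ (Filter.tendsto_atTop_add_const_left _ (ψ 0)
        (Filter.tendsto_id.const_mul_atTop hℓ))
      filter_upwards [Filter.eventually_ge_atTop 0] with x hx
      have := (hmψ x 0 hx).1
      simp only [id, sub_zero] at *
      linarith
    · refine Filter.tendsto_atBot_mono' _ ?_ (Filter.tendsto_atBot_add_const_left _ (ψ 0)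
        (Filter.tendsto_id.const_mul_atBot hℓ))
      filter_upwards [Filter.eventually_le_atBot 0] with x hx
      have := (hmψ 0 x hx).1
      simp only [id, zero_sub] at *
      linarith
  · intro x y
    rcases le_total y x with h | h
    · exact hbl x y h
    · rw [abs_sub_comm x y, abs_sub_comm (ψ x)]
      exact hbl y x h
  · intro x
    have : ψ (x + a) - ψ x = b := by
      rw [hd, ← hconst b]
      congr 1
      ext t
      rw [show x + a - t = x - t + a by ring, hper]
      ring
    linarith
  · intro x
    refine f.dist_normed_convolution_le hc.aestronglyMeasurable fun y hy => ?_
    rw [Real.dist_eq]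
    refine (hbilip y x).trans (mul_le_mul_of_nonneg_left ?_ hL.le)
    rw [← Real.dist_eq]
    exact (Metric.mem_ball.1 hy).le

theorem stmt_4 (ℓ L a b : ℝ) (hℓ : 0 < ℓ) (hℓL : ℓ < L) (ha : 0 < a) (hb : 0 < b)
    (φ : ℝ → ℝ)
    (hbilip : ∀ x y : ℝ, ℓ * |x - y| ≤ |φ x - φ y| ∧ |φ x - φ y| ≤ L * |x - y|)
    (hper : ∀ x, φ (x + a) = φ x + b) :
    ∃ φseq : ℕ → ℝ → ℝ,
      (∀ n, ContDiff ℝ (⊤ : ℕ∞) (φseq n)) ∧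
      (∀ n, Function.Bijective (φseq n)) ∧
      (∀ n x y, ℓ * |x - y| ≤ |φseq n x - φseq n y| ∧ |φseq n x - φseq n y| ≤ L * |x - y|) ∧
      (∀ n x, φseq n (x + a) = φseq n x + b) ∧
      TendstoUniformly φseq φ Filter.atTop := by
  have hL : 0 < L := hℓ.trans hℓL
  have hc : Continuous φ := by
    have : LipschitzWith ⟨L, hL.le⟩ φ := LipschitzWith.of_dist_le_mul fun x y => by
      rw [Real.dist_eq, Real.dist_eq]
      exact (hbilip x y).2
    exact this.continuous
  have hinj : Function.Injective φ := by
    intro x y hxy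
    have h := (hbilip x y).1
    rw [hxy, sub_self, abs_zero] at h
    have h1 : |x - y| ≤ 0 := by
      by_contra hcon
      have := mul_pos hℓ (not_le.1 hcon)
      linarith
    exact sub_eq_zero.1 (abs_nonpos_iff.1 h1)
  have hmono : StrictMono φ := by
    rcases hc.strictMono_of_inj hinj with h | h
    · exact h
    · have h1 := h (show (0 : ℝ) < 0 + a by linarith)
      rw [hper] at h1
      linarith
  have hm : ∀ x y : ℝ, y ≤ x → ℓ * (x - y) ≤ φ x - φ y ∧ φ x - φ y ≤ L * (x - y) := by
    intro x y hxy
    have h := hbilip x y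
    rwa [abs_of_nonneg (sub_nonneg.2 hxy), abs_of_nonneg (sub_nonneg.2 (hmono.monotone hxy))] at h
  choose ψ h1 h2 h3 h4 h5 using fun n : ℕ => stmt_4_aux ℓ L a b hℓ φ hc hm
    (fun x y => (hbilip x y).2) hL hper (1 / ((n : ℝ) + 1)) (by positivity)
  refine ⟨ψ, h1, h2, h3, h4, ?_⟩
  rw [Metric.tendstoUniformly_iff]
  intro δ hδ
  have ht : Filter.Tendsto (fun n : ℕ => L * (1 / ((n : ℝ) + 1))) Filter.atTop (nhds 0) := by
    simpa using tendsto_one_div_add_atTop_nhds_zero_nat.const_mul L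
  filter_upwards [ht.eventually (gt_mem_nhds hδ)] with n hn x
  rw [dist_comm]
  exact (h5 n x).trans_lt hn
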